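/- Let d ≥ 3, r ≤ R ∈ N, and define D = {y ∈ 10rZ^d : B(y,r) ∩ B(2R) ≠ ∅} and, for a simple random walk started at z ∈ B(R), the indicators ζ_y = 1[T_{B(y,r)} < ∞]. Then there exists C < ∞ (depending only on d) such that E_z[Σ_{y∈D} ζ_y] ≤ C·(R/r)². -/

import Mathlib

open MeasureTheory ENNReal Filter

noncomputable section

abbrev Zd (d : ℕ) := Fin d → ℤ

def supNorm {d : ℕ} (x : Zd d) : ℕ := Finset.univ.sup fun i => (x i).natAbs

def IsNbr {d : ℕ} (x y : Zd d) : Prop := (∑ i, |x i - y i|) = 1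

def stepVec {d : ℕ} (p : Fin d × Bool) : Zd d :=
  fun j => if j = p.1 then (if p.2 then 1 else -1) else 0

def nbrs {d : ℕ} (y : Zd d) : Finset (Zd d) :=
  Finset.univ.image fun p : Fin d × Bool => y + stepVec p

/-- A family of measures which is a simple random walk on `ℤ^d` started at `x`. -/
structure SRW (d : ℕ) where
  P : Zd d → Measure (ℕ → Zd d)
  isProb : ∀ x, IsProbabilityMeasure (P x)
  start : ∀ x, P x {ω | ω 0 = x} = 1
  nn : ∀ x, P x {ω | ∀ t, IsNbr (ω t) (ω (t+1))} = 1
  cyl : ∀ (x : Zd d) (n : ℕ) (γ : ℕ → Zd d), γ 0 = x →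
      (∀ t < n, IsNbr (γ t) (γ (t+1))) →
      P x {ω | ∀ t ≤ n, ω t = γ t} = (((2 * d : ℕ) : ℝ≥0∞))⁻¹ ^ n

def HitBy {d : ℕ} (K : Set (Zd d)) (ℓ : ℕ) : Set (ℕ → Zd d) := {ω | ∃ t ≤ ℓ, ω t ∈ K}

def Hits {d : ℕ} (K : Set (Zd d)) : Set (ℕ → Zd d) := {ω | ∃ t, ω t ∈ K}

def nPaths (d : ℕ) : ℕ → Zd d → Zd d → ℕ
  | 0, x, y => if x = y then 1 else 0
  | t+1, x, y => ∑ z ∈ nbrs y, nPaths d t x z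

def pKer (d t : ℕ) (x y : Zd d) : ℝ≥0∞ := (nPaths d t x y : ℝ≥0∞) / ((2*d : ℕ) : ℝ≥0∞)^t

def green (d : ℕ) (x y : Zd d) : ℝ≥0∞ := ∑' t, pKer d t x y

def nAvoid {d : ℕ} (K : Finset (Zd d)) : ℕ → Zd d → ℕ
  | 0, _ => 1
  | t+1, x => ∑ z ∈ (nbrs x).filter (fun z => z ∉ K), nAvoid K t z

def escProb {d : ℕ} (K : Finset (Zd d)) (x : Zd d) : ℝ≥0∞ :=
  ⨅ n, (nAvoid K n x : ℝ≥0∞) / ((2*d : ℕ) : ℝ≥0∞)^n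

def cap {d : ℕ} (K : Finset (Zd d)) : ℝ≥0∞ := ∑ x ∈ K, escProb K x

def ConnIn {d : ℕ} (S : Set (Zd d)) (x y : Zd d) : Prop :=
  ∃ (n : ℕ) (γ : ℕ → Zd d), γ 0 = x ∧ γ n = y ∧ (∀ t < n, IsNbr (γ t) (γ (t+1))) ∧ ∀ t ≤ n, γ t ∈ S

def PercSet {d : ℕ} (S : Set (Zd d)) : Prop := ∃ x ∈ S, {y | ConnIn S x y}.Infinite

def IsAnimal {d : ℕ} (H : Finset (Zd d)) : Prop :=
  (0 : Zd d) ∈ H ∧ ∀ x ∈ H, ∀ y ∈ H, ConnIn (H : Set (Zd d)) x y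

abbrev Animal (d : ℕ) := {H : Finset (Zd d) // IsAnimal H}

def zooTrace {d : ℕ} {Ω : Type*} (N : Zd d × Animal d → Ω → ℕ) (ω : Ω) : Set (Zd d) :=
  {z | ∃ p : Zd d × Animal d, 1 ≤ N p ω ∧ z - p.1 ∈ p.2.1}

def poissonProb (lam : ℝ) (k : ℕ) : ℝ≥0∞ :=
  ENNReal.ofReal (Real.exp (-lam) * lam ^ k / (Nat.factorial k))

def cluster {d : ℕ} (S : Set (Zd d)) (x : Zd d) : Set (Zd d) := {y | x ∈ S ∧ ConnIn S x y}

def closF {d : ℕ} (H : Finset (Zd d)) : Finset (Zd d) := H ∪ H.biUnion nbrs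


abbrev Worm (d : ℕ) := Σ n : ℕ, (Zd d × (Fin n → Fin d × Bool))

def wormLen {d : ℕ} (w : Worm d) : ℕ := w.1 + 1

def IsBernoulliSite {d : ℕ} (P : Measure (Zd d → Bool)) (p : ℝ≥0∞) : Prop :=
  ∀ A B : Finset (Zd d), Disjoint A B →
    P {η | (∀ a ∈ A, η a = true) ∧ ∀ b ∈ B, η b = false} = p ^ A.card * (1 - p) ^ B.card

/-- The critical probability of Bernoulli site percolation on `ℤ^d`. -/
def pcSite (d : ℕ) : ℝ≥0∞ :=
  sInf {p | ∀ P : Measure (Zd d → Bool), IsProbabilityMeasure P → IsBernoulliSite P p →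
    P {η | PercSet {x | η x = true}} = 1}

open Classical in
/-- The Grimmett–Marstrand exploration process: given an ordering `emb` of the (directed)
nearest-neighbour edges and outcomes `b t`, produce the pair (good set, bad set) at step `t`. -/
def explore {d : ℕ} (emb : (Zd d × Zd d) ↪ ℕ) (b : ℕ → Bool) : ℕ → Finset (Zd d) × Finset (Zd d)
  | 0 => if b 0 then ({0}, ∅) else (∅, {0})
  | t+1 =>
    let G := (explore emb b t).1
    let B := (explore emb b t).2
    let cand : Finset (Zd d × Zd d) :=
      G.biUnion fun u => ((nbrs u).filter fun w => w ∉ G ∧ w ∉ B).image fun w => (u, w)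
    if h : cand.Nonempty then
      let e := (Finset.exists_min_image cand (fun p => emb p) h).choose
      if b (t+1) then (insert e.2 G, B) else (G, insert e.2 B)
    else (G, B)

/-- Mutual Dirichlet energy of two measures on `ℤ^d` w.r.t. the random-walk Green function. -/
def energy (d : ℕ) (μ₁ μ₂ : Zd d → ℝ≥0∞) : ℝ≥0∞ :=
  ∑' x, ∑' y, green d x y * μ₁ x * μ₂ y

/-- The transition operator of the simple random walk. -/
def Qop {d : ℕ} (f : Zd d → ℝ≥0∞) (x : Zd d) : ℝ≥0∞ :=
  ∑ p : Fin d × Bool, (((2 * d : ℕ) : ℝ≥0∞))⁻¹ * f (x + stepVec p)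

/-- Squared Euclidean norm. -/
def nsq {d : ℕ} (x : Zd d) : ℝ := ∑ i, (x i : ℝ) ^ 2

/-- Indicator of the sup-norm ball. -/
def ind {d : ℕ} (y : Zd d) (r : ℕ) (x : Zd d) : ℝ≥0∞ := if supNorm (x - y) ≤ r then 1 else 0

lemma nsq_nonneg {d : ℕ} (x : Zd d) : 0 ≤ nsq x := Finset.sum_nonneg fun i _ => sq_nonneg _

lemma supNorm_le {d : ℕ} (x : Zd d) (r : ℕ) : supNorm x ≤ r ↔ ∀ i, |x i| ≤ (r : ℤ) := by
  unfold supNorm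
  rw [Finset.sup_le_iff]
  constructor
  · intro h i
    have := h i (Finset.mem_univ i)
    rw [Int.abs_eq_natAbs]; exact_mod_cast this
  · intro h i _
    have := h i
    rw [Int.abs_eq_natAbs] at this; exact_mod_cast this

lemma nsq_step {d : ℕ} (x : Zd d) (i : Fin d) (b : Bool) :
    nsq (x + stepVec (i, b)) = nsq x + (if b then 2 else -2) * (x i : ℝ) + 1 := by
  unfold nsq
  have : ∀ j, (((x + stepVec (i, b)) j : ℤ) : ℝ) ^ 2 = (x j : ℝ) ^ 2 +
      if j = i then ((if b then 2 else -2) * (x j : ℝ) + 1) else 0 := by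
    intro j
    by_cases hj : j = i
    · cases b <;> simp [stepVec, hj] <;> ring
    · simp [stepVec, hj]
  simp_rw [this]
  rw [Finset.sum_add_distrib, Finset.sum_ite_eq' Finset.univ i]
  simp; ring

lemma Qop_mono {d : ℕ} {f g : Zd d → ℝ≥0∞} (h : ∀ x, f x ≤ g x) (x : Zd d) :
    Qop f x ≤ Qop g x := by
  unfold Qop
  gcongr
  exact h _

lemma Qit_mono {d : ℕ} {f g : Zd d → ℝ≥0∞} (h : ∀ x, f x ≤ g x) (t : ℕ) :
    ∀ x, Qop^[t] f x ≤ Qop^[t] g x := by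
  induction t with
  | zero => simpa using h
  | succ t ih =>
    intro x
    rw [Function.iterate_succ_apply', Function.iterate_succ_apply']
    exact Qop_mono ih x

lemma Qop_add {d : ℕ} (f g : Zd d → ℝ≥0∞) (x : Zd d) :
    Qop (fun y => f y + g y) x = Qop f x + Qop g x := by
  simp [Qop, mul_add, Finset.sum_add_distrib]

lemma Qop_tsum {d : ℕ} {ι : Type*} (f : ι → Zd d → ℝ≥0∞) (x : Zd d) :
    Qop (fun y => ∑' i, f i y) x = ∑' i, Qop (f i) x := by
  unfold Qop
  rw [Summable.tsum_finsetSum (fun _ _ => ENNReal.summable)]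
  simp_rw [ENNReal.tsum_mul_left]

lemma Qit_tsum {d : ℕ} {ι : Type*} (f : ι → Zd d → ℝ≥0∞) (t : ℕ) :
    ∀ x, Qop^[t] (fun y => ∑' i, f i y) x = ∑' i, Qop^[t] (f i) x := by
  induction t with
  | zero => intro x; rfl
  | succ t ih =>
    intro x
    simp_rw [Function.iterate_succ_apply']
    rw [← Qop_tsum]
    congr 1
    funext y; exact ih y

lemma card_inv {d : ℕ} (hd : 3 ≤ d) :
    (((2 * d : ℕ) : ℝ≥0∞))⁻¹ = ENNReal.ofReal ((2 * d : ℝ)⁻¹) := by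
  have : (3 : ℝ) ≤ d := by exact_mod_cast hd
  rw [ENNReal.ofReal_inv_of_pos (by positivity)]
  congr 1
  rw [← ENNReal.ofReal_natCast]; push_cast; rfl

lemma Qop_ofReal {d : ℕ} (hd : 3 ≤ d) (g : Zd d → ℝ) (hg : ∀ x, 0 ≤ g x) (x : Zd d) :
    Qop (fun y => ENNReal.ofReal (g y)) x =
      ENNReal.ofReal (∑ i : Fin d, (2 * d : ℝ)⁻¹ *
        (g (x + stepVec (i, true)) + g (x + stepVec (i, false)))) := by
  unfold Qop
  rw [card_inv hd, Fintype.sum_prod_type]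
  rw [ENNReal.ofReal_sum_of_nonneg (fun i _ => by
    have := hg (x + stepVec (i, true))
    have := hg (x + stepVec (i, false))
    positivity)]
  refine Finset.sum_congr rfl fun i _ => ?_
  rw [Fintype.sum_bool, ← mul_add, ENNReal.ofReal_mul (by positivity),
    ENNReal.ofReal_add (hg _) (hg _)]

lemma nbr_step {d : ℕ} (x y : Zd d) (h : IsNbr x y) : ∃ p : Fin d × Bool, y = x + stepVec p := by
  unfold IsNbr at h
  have hne : ∃ i, x i ≠ y i := by
    by_contra hc
    push Not at hc
    simp [hc] at h
  obtain ⟨i, hi⟩ := hne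
  have h1 := Finset.add_sum_erase Finset.univ (fun i => |x i - y i|) (Finset.mem_univ i)
  have h2 : 0 ≤ ∑ j ∈ Finset.univ.erase i, |x j - y j| := Finset.sum_nonneg fun _ _ => abs_nonneg _
  have h3 : 0 < |x i - y i| := abs_pos.2 (sub_ne_zero.2 hi)
  have h4 : ∑ j ∈ Finset.univ.erase i, |x j - y j| = 0 := by linarith
  have h5 : |x i - y i| = 1 := by linarith
  rw [Finset.sum_eq_zero_iff_of_nonneg (fun _ _ => abs_nonneg _)] at h4
  have h6 : ∀ j, j ≠ i → x j = y j := fun j hj => by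
    have := h4 j (by simp [hj])
    exact sub_eq_zero.1 (abs_eq_zero.1 this)
  rcases (abs_eq (by norm_num)).1 h5 with h7 | h7
  · refine ⟨(i, false), funext fun j => ?_⟩
    by_cases hj : j = i
    · subst hj; simp [stepVec]; omega
    · simp [stepVec, hj, h6 j hj]
  · refine ⟨(i, true), funext fun j => ?_⟩
    by_cases hj : j = i
    · subst hj; simp [stepVec]; omega
    · simp [stepVec, hj, h6 j hj]

lemma step_nbr {d : ℕ} (x : Zd d) (p : Fin d × Bool) : IsNbr x (x + stepVec p) := by
  unfold IsNbr
  rw [Finset.sum_eq_single p.1]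
  · cases h : p.2 <;> simp [stepVec, h]
  · intro j _ hj; simp [stepVec, hj]
  · simp

lemma nn_null {d : ℕ} (W : SRW d) (z : Zd d) :
    W.P z {ω | ¬ ∀ t, IsNbr (ω t) (ω (t+1))} = 0 := by
  haveI := W.isProb z
  have hm : MeasurableSet {ω : ℕ → Zd d | ∀ t, IsNbr (ω t) (ω (t+1))} := by
    rw [Set.setOf_forall]
    refine MeasurableSet.iInter fun t => ?_
    have : Measurable fun ω : ℕ → Zd d => (ω t, ω (t+1)) := by fun_prop
    exact this (MeasurableSet.of_discrete (s := {q : Zd d × Zd d | IsNbr q.1 q.2}))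
  exact (prob_compl_eq_zero_iff hm).2 (W.nn z)

lemma start_null {d : ℕ} (W : SRW d) (z : Zd d) :
    W.P z {ω | ¬ ω 0 = z} = 0 := by
  haveI := W.isProb z
  have hm : MeasurableSet {ω : ℕ → Zd d | ω 0 = z} := by
    have : Measurable fun ω : ℕ → Zd d => ω 0 := by fun_prop
    exact this (MeasurableSet.of_discrete (s := {z}))
  exact (prob_compl_eq_zero_iff hm).2 (W.start z)

lemma hit_aux {d : ℕ} (W : SRW d) (z : Zd d) (K : Set (Zd d))
    (ψ : Zd d → ℝ≥0∞) (hψ : ∀ x, Qop ψ x ≤ ψ x) (hK : ∀ x ∈ K, 1 ≤ ψ x) (n : ℕ) :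
    ∀ (m : ℕ) (γ : ℕ → Zd d), γ 0 = z → (∀ t < m, IsNbr (γ t) (γ (t+1))) →
      W.P z {ω | (∀ t ≤ m, ω t = γ t) ∧ ∃ t, m ≤ t ∧ t ≤ m + n ∧ ω t ∈ K}
        ≤ (((2 * d : ℕ) : ℝ≥0∞))⁻¹ ^ m * ψ (γ m) := by
  have hin : ∀ (n m : ℕ) (γ : ℕ → Zd d), γ 0 = z → (∀ t < m, IsNbr (γ t) (γ (t+1))) → γ m ∈ K →
      W.P z {ω | (∀ t ≤ m, ω t = γ t) ∧ ∃ t, m ≤ t ∧ t ≤ m + n ∧ ω t ∈ K}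
        ≤ (((2 * d : ℕ) : ℝ≥0∞))⁻¹ ^ m * ψ (γ m) := by
    intro n m γ h0 hn hm
    calc _ ≤ W.P z {ω | ∀ t ≤ m, ω t = γ t} := measure_mono fun ω h => h.1
      _ = (((2 * d : ℕ) : ℝ≥0∞))⁻¹ ^ m * 1 := by rw [W.cyl z m γ h0 hn, mul_one]
      _ ≤ _ := by gcongr; exact hK _ hm
  induction n with
  | zero =>
    intro m γ h0 hn
    by_cases hm : γ m ∈ K
    · exact hin 0 m γ h0 hn hm
    · have : {ω : ℕ → Zd d | (∀ t ≤ m, ω t = γ t) ∧ ∃ t, m ≤ t ∧ t ≤ m + 0 ∧ ω t ∈ K} = ∅ := by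
        ext ω
        simp only [Set.mem_setOf_eq, Set.mem_empty_iff_false, iff_false]
        rintro ⟨h1, t, h2, h3, h4⟩
        have : t = m := by omega
        subst this
        rw [h1 t le_rfl] at h4
        exact hm h4
      rw [this]; simp
  | succ n ih =>
    intro m γ h0 hn
    by_cases hm : γ m ∈ K
    · exact hin (n+1) m γ h0 hn hm
    · let γ' : Fin d × Bool → ℕ → Zd d := fun p t => if t ≤ m then γ t else γ m + stepVec p
      have hsub : {ω : ℕ → Zd d | (∀ t ≤ m, ω t = γ t) ∧ ∃ t, m ≤ t ∧ t ≤ m + (n+1) ∧ ω t ∈ K} ⊆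
          (⋃ p : Fin d × Bool, {ω : ℕ → Zd d | (∀ t ≤ m+1, ω t = γ' p t) ∧
            ∃ t, m+1 ≤ t ∧ t ≤ m+1+n ∧ ω t ∈ K}) ∪ {ω | ¬ ∀ t, IsNbr (ω t) (ω (t+1))} := by
        rintro ω ⟨h1, t, h2, h3, h4⟩
        by_cases hnn : ∀ t, IsNbr (ω t) (ω (t+1))
        · left
          obtain ⟨p, hp⟩ := nbr_step _ _ (hnn m)
          refine Set.mem_iUnion.2 ⟨p, ?_, t, ?_, by omega, h4⟩
          · intro s hs
            by_cases hsm : s ≤ m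
            · simp [γ', hsm, h1 s hsm]
            · have : s = m + 1 := by omega
              subst this
              simp [γ', hp, h1 m le_rfl]
          · rcases Nat.lt_or_ge m t with h | h
            · exact h
            · have : t = m := by omega
              subst this
              rw [h1 t le_rfl] at h4
              exact absurd h4 hm
        · right; exact hnn
      calc _ ≤ _ := measure_mono hsub
        _ ≤ _ := measure_union_le _ _
        _ = W.P z (⋃ p : Fin d × Bool, {ω : ℕ → Zd d | (∀ t ≤ m+1, ω t = γ' p t) ∧
            ∃ t, m+1 ≤ t ∧ t ≤ m+1+n ∧ ω t ∈ K}) := by rw [nn_null, add_zero]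
        _ ≤ ∑ p : Fin d × Bool, _ := measure_iUnion_fintype_le _ _
        _ ≤ ∑ p : Fin d × Bool, (((2 * d : ℕ) : ℝ≥0∞))⁻¹ ^ (m+1) * ψ (γ m + stepVec p) := by
          refine Finset.sum_le_sum fun p _ => ?_
          have := ih (m+1) (γ' p) (by simp [γ', h0]) (by
            intro t ht
            by_cases h : t < m
            · have h' : t + 1 ≤ m := h
              simp only [γ', h.le, h', if_true]; exact hn t h
            · have : t = m := by omega
              subst this
              simp only [γ', le_rfl, if_true]
              simp only [show ¬ (t + 1 ≤ t) by omega, if_false]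
              exact step_nbr _ _)
          simpa [γ'] using this
        _ = (((2 * d : ℕ) : ℝ≥0∞))⁻¹ ^ m * Qop ψ (γ m) := by
          unfold Qop
          rw [Finset.mul_sum]
          refine Finset.sum_congr rfl fun p _ => ?_
          rw [pow_succ, mul_assoc]
        _ ≤ _ := by gcongr; exact hψ _

lemma hit_le {d : ℕ} (W : SRW d) (z : Zd d) (K : Set (Zd d))
    (ψ : Zd d → ℝ≥0∞) (hψ : ∀ x, Qop ψ x ≤ ψ x) (hK : ∀ x ∈ K, 1 ≤ ψ x) :
    W.P z (Hits K) ≤ ψ z := by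
  have h1 : Hits K = ⋃ n, HitBy K n := by
    ext ω
    simp only [Hits, HitBy, Set.mem_setOf_eq, Set.mem_iUnion]
    exact ⟨fun ⟨t, ht⟩ => ⟨t, t, le_rfl, ht⟩, fun ⟨_, t, _, ht⟩ => ⟨t, ht⟩⟩
  have hmono : Monotone fun n => HitBy K n := by
    rintro a b hab ω ⟨t, h1, h2⟩
    exact ⟨t, h1.trans hab, h2⟩
  rw [h1, hmono.measure_iUnion]
  refine iSup_le fun n => ?_
  have h2 := hit_aux W z K ψ hψ hK n 0 (fun _ => z) rfl (by simp)
  calc W.P z (HitBy K n) ≤ W.P z ({ω | (∀ t ≤ 0, ω t = z) ∧ ∃ t, 0 ≤ t ∧ t ≤ 0 + n ∧ ω t ∈ K} ∪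
        {ω | ¬ ω 0 = z}) := by
        refine measure_mono ?_
        rintro ω ⟨t, h1, h2⟩
        by_cases h : ω 0 = z
        · left
          refine ⟨fun s hs => ?_, t, by omega, by omega, h2⟩
          obtain rfl : s = 0 := by omega
          exact h
        · right; exact h
    _ ≤ _ := measure_union_le _ _
    _ ≤ ψ z := by rw [start_null, add_zero]; simpa using h2

/-- The Green operator. -/
def Gr {d : ℕ} (f : Zd d → ℝ≥0∞) (x : Zd d) : ℝ≥0∞ := ∑' t : ℕ, Qop^[t] f x

lemma Qop_Gr {d : ℕ} (f : Zd d → ℝ≥0∞) (x : Zd d) : Qop (Gr f) x ≤ Gr f x := by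
  have h1 : Qop (Gr f) x = ∑' t : ℕ, Qop^[t+1] f x := by
    have := Qop_tsum (fun t : ℕ => Qop^[t] f) x
    simp_rw [Function.iterate_succ_apply']
    exact this
  rw [h1]
  unfold Gr
  exact ENNReal.tsum_comp_le_tsum_of_injective (add_left_injective 1) (fun t => Qop^[t] f x)

lemma Gr_le {d : ℕ} (f g : Zd d → ℝ≥0∞) (h : ∀ x, f x + Qop g x ≤ g x) (x : Zd d) :
    Gr f x ≤ g x := by
  have key : ∀ n : ℕ, ∀ x, ∑ t ∈ Finset.range n, Qop^[t] f x ≤ g x := by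
    intro n
    induction n with
    | zero => simp
    | succ n ih =>
      intro x
      rw [Finset.sum_range_succ']
      have : ∑ t ∈ Finset.range n, Qop^[t+1] f x =
          Qop (fun y => ∑ t ∈ Finset.range n, Qop^[t] f y) x := by
        unfold Qop
        simp_rw [Finset.mul_sum]
        rw [Finset.sum_comm]
        refine Finset.sum_congr rfl fun t _ => ?_
        rw [Function.iterate_succ_apply']
      rw [this]
      calc _ ≤ Qop g x + f x := by
            gcongr
            · exact Qop_mono ih x
            · simp
        _ ≤ g x := by rw [add_comm]; exact h x
  unfold Gr
  rw [ENNReal.tsum_eq_iSup_nat]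
  exact iSup_le fun n => key n x

lemma abs_le_of_nsq {d : ℕ} (x : Zd d) (r : ℕ) (h : nsq x ≤ (r : ℝ) ^ 2) : supNorm x ≤ r := by
  rw [supNorm_le]
  intro i
  have h1 : (x i : ℝ) ^ 2 ≤ nsq x :=
    Finset.single_le_sum (f := fun i => (x i : ℝ) ^ 2) (fun i _ => sq_nonneg _) (Finset.mem_univ i)
  have h2 := abs_le_of_sq_le_sq (h1.trans h) (by positivity)
  exact_mod_cast h2

lemma ind_low {d : ℕ} (hd : 3 ≤ d) (y w : Zd d) (r : ℕ) (hr : 1 ≤ r)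
    (hw : supNorm (w - y) ≤ r) (t : ℕ) :
    ∀ x, 1 ≤ Qop^[t] (ind y (2 * r)) x + ENNReal.ofReal ((nsq (x - w) + t) / (r : ℝ) ^ 2) := by
  have hr1 : (1 : ℝ) ≤ r := by exact_mod_cast hr
  have hr' : (0 : ℝ) < (r : ℝ) ^ 2 := by positivity
  have hd1 : (3 : ℝ) ≤ d := by exact_mod_cast hd
  have hd0 : (d : ℝ) ≠ 0 := by positivity
  induction t with
  | zero =>
    intro x
    simp only [Function.iterate_zero, id, ind]
    split_ifs with h
    · exact le_self_add
    · rw [zero_add, ENNReal.one_le_ofReal, le_div_iff₀ hr']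
      by_contra hc
      apply h
      have h2 := abs_le_of_nsq (x - w) r (by push Not at hc; simp at hc; linarith)
      rw [supNorm_le] at *
      intro i
      have h3 := h2 i
      have h4 := hw i
      simp only [Pi.sub_apply] at *
      rw [abs_le] at *
      push_cast
      omega
  | succ t ih =>
    intro x
    have h1 := Qop_mono ih x
    rw [Qop_add, Qop_ofReal hd _ (fun x => by have := nsq_nonneg (x - w); positivity)] at h1
    rw [Function.iterate_succ_apply']
    have h2 : Qop (fun _ : Zd d => (1 : ℝ≥0∞)) x = 1 := by
      have := Qop_ofReal hd (fun _ => 1) (fun _ => zero_le_one) x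
      simp only [ENNReal.ofReal_one] at this
      rw [this, ← ENNReal.ofReal_one]
      congr 1
      rw [Finset.sum_const, Finset.card_univ, Fintype.card_fin, nsmul_eq_mul]
      field_simp; norm_num
    rw [h2] at h1
    convert h1 using 3
    have h3 : ∀ i : Fin d, (2 * d : ℝ)⁻¹ * ((nsq (x + stepVec (i, true) - w) + t) / (r : ℝ) ^ 2 +
        (nsq (x + stepVec (i, false) - w) + t) / (r : ℝ) ^ 2) =
        (d : ℝ)⁻¹ * ((nsq (x - w) + (t + 1 : ℕ)) / (r : ℝ) ^ 2) := by
      intro i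
      rw [add_sub_right_comm, add_sub_right_comm, nsq_step, nsq_step]
      push_cast
      simp only [if_true, Bool.false_eq_true, if_false]
      field_simp
      ring
    simp_rw [h3]
    rw [Finset.sum_const, Finset.card_univ, Fintype.card_fin, nsmul_eq_mul]
    field_simp

lemma Gr_low {d : ℕ} (hd : 3 ≤ d) (y w : Zd d) (r : ℕ) (hr : 1 ≤ r) (hw : supNorm (w - y) ≤ r) :
    ENNReal.ofReal ((r : ℝ) ^ 2 / 4) ≤ Gr (ind y (2 * r)) w := by
  have hr1 : (1 : ℝ) ≤ r := by exact_mod_cast hr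
  have hr' : (0 : ℝ) < (r : ℝ) ^ 2 := by positivity
  have key : ∀ t ∈ Finset.range (r ^ 2 / 2 + 1),
      ENNReal.ofReal (1 / 2) ≤ Qop^[t] (ind y (2 * r)) w := by
    intro t ht
    have h1 := ind_low hd y w r hr hw t w
    have h2 : (nsq (w - w) + t) / (r : ℝ) ^ 2 ≤ 1 / 2 := by
      rw [div_le_iff₀ hr']
      have : 2 * t ≤ r ^ 2 := by rw [Finset.mem_range] at ht; omega
      have : (2 * t : ℝ) ≤ (r : ℝ) ^ 2 := by exact_mod_cast this
      simp [nsq]; linarith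
    have h3 : ENNReal.ofReal (1/2) + ENNReal.ofReal (1/2) ≤
        Qop^[t] (ind y (2 * r)) w + ENNReal.ofReal (1/2) := by
      rw [← ENNReal.ofReal_add (by norm_num) (by norm_num), add_halves, ENNReal.ofReal_one]
      exact h1.trans (add_le_add le_rfl (ENNReal.ofReal_le_ofReal h2))
    exact (ENNReal.add_le_add_iff_right ENNReal.ofReal_ne_top).1 h3
  calc ENNReal.ofReal ((r : ℝ) ^ 2 / 4) ≤ ENNReal.ofReal (((r ^ 2 / 2 + 1 : ℕ) : ℝ) * (1 / 2)) := by
        apply ENNReal.ofReal_le_ofReal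
        have h1 : r ^ 2 ≤ 2 * (r ^ 2 / 2 + 1) := by omega
        have h2 : ((r ^ 2 : ℕ) : ℝ) ≤ ((2 * (r ^ 2 / 2 + 1) : ℕ) : ℝ) := by exact_mod_cast h1
        rw [Nat.cast_mul, Nat.cast_pow] at h2
        generalize ((r ^ 2 / 2 + 1 : ℕ) : ℝ) = k at *
        norm_num only at h2 ⊢
        linarith
    _ = ∑ t ∈ Finset.range (r ^ 2 / 2 + 1), ENNReal.ofReal (1 / 2) := by
        rw [Finset.sum_const, Finset.card_range, nsmul_eq_mul, ENNReal.ofReal_mul (by positivity),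
          ENNReal.ofReal_natCast]
    _ ≤ ∑ t ∈ Finset.range (r ^ 2 / 2 + 1), Qop^[t] (ind y (2 * r)) w := Finset.sum_le_sum key
    _ ≤ _ := ENNReal.sum_le_tsum _

/-- The fourth root of the inverse. -/
def hfun (v : ℝ) : ℝ := (Real.sqrt (Real.sqrt v))⁻¹

lemma hfun_pos {v : ℝ} (hv : 0 < v) : 0 < hfun v := by
  unfold hfun
  have := Real.sqrt_pos.2 (Real.sqrt_pos.2 hv)
  positivity

lemma hfun_pow {v : ℝ} (hv : 0 < v) : hfun v ^ 4 * v = 1 := by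
  have h1 := Real.sqrt_pos.2 hv
  have h2 : Real.sqrt (Real.sqrt v) ^ 4 = v := by
    rw [show (4 : ℕ) = 2 * 2 from rfl, pow_mul, Real.sq_sqrt h1.le, Real.sq_sqrt hv.le]
  unfold hfun
  rw [inv_pow, h2, inv_mul_cancel₀ hv.ne']

lemma hfun_anti {v w : ℝ} (hv : 0 < v) (h : v ≤ w) : hfun w ≤ hfun v := by
  unfold hfun
  have := Real.sqrt_pos.2 (Real.sqrt_pos.2 hv)
  gcongr

lemma poly_bound {s : ℝ} (hs : |s| ≤ 1 / 20) :
    1 ≤ (1 - s / 4 + 11 / 64 * s ^ 2) ^ 4 * (1 + s) := by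
  obtain ⟨hs1, hs2⟩ := abs_le.1 hs
  have hk : ∀ k : ℕ, -1 ≤ s ^ k ∧ s ^ k ≤ 1 := by
    intro k
    rw [← abs_le, abs_pow]
    exact pow_le_one₀ (abs_nonneg s) (by linarith)
  have hB : -1 ≤ -549/2048 + 863/4096 * s ^ 1 - 4455/65536 * s ^ 2 + 6897/262144 * s ^ 3
      - 70543/16777216 * s ^ 4 + 14641/16777216 * s ^ 5 := by
    linarith [(hk 1).1, (hk 2).2, (hk 3).1, (hk 4).2, (hk 5).1]
  set B := -549/2048 + 863/4096 * s ^ 1 - 4455/65536 * s ^ 2 + 6897/262144 * s ^ 3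
      - 70543/16777216 * s ^ 4 + 14641/16777216 * s ^ 5 with hBdef
  have e : (1 - s / 4 + 11 / 64 * s ^ 2) ^ 4 * (1 + s) =
      1 + s ^ 2 * (1 / 16 + 31 / 64 * s + s ^ 2 * B) := by
    rw [hBdef]; ring
  have h2 : s ^ 2 ≤ 1 / 400 := by
    have := sq_abs s
    nlinarith [abs_nonneg s]
  have h3 : -(1 / 400) ≤ s ^ 2 * B := by nlinarith [sq_nonneg s]
  have h4 : 0 ≤ 1 / 16 + 31 / 64 * s + s ^ 2 * B := by linarith
  rw [e]
  have := mul_nonneg (sq_nonneg s) h4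
  linarith

lemma hfun_up {v τ : ℝ} (hv : 0 < v) (hτ : |τ| ≤ v / 20) :
    hfun (v + τ) ≤ hfun v * (1 - (τ / v) / 4 + 11 / 64 * (τ / v) ^ 2) := by
  obtain ⟨s, rfl⟩ : ∃ s, τ = v * s := ⟨τ / v, by field_simp⟩
  have hs : |s| ≤ 1 / 20 := by
    rw [abs_mul, abs_of_pos hv] at hτ
    have : v * |s| ≤ v * (1 / 20) := by linarith
    exact le_of_mul_le_mul_left this hv
  rw [mul_div_cancel_left₀ _ hv.ne']
  obtain ⟨hs1, hs2⟩ := abs_le.1 hs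
  have hp : 0 < v + v * s := by nlinarith
  have hP : 0 < 1 - s / 4 + 11 / 64 * s ^ 2 := by nlinarith [sq_nonneg s]
  have e1 := hfun_pow hv
  have e2 := hfun_pow hp
  have h1 := hfun_pos hv
  refine le_of_pow_le_pow_left₀ (n := 4) (by norm_num) (by positivity) ?_
  refine le_of_mul_le_mul_right ?_ hp
  rw [e2, mul_pow]
  calc (1 : ℝ) ≤ (1 - s / 4 + 11 / 64 * s ^ 2) ^ 4 * (1 + s) := poly_bound hs
    _ = (hfun v ^ 4 * v) * ((1 - s / 4 + 11 / 64 * s ^ 2) ^ 4 * (1 + s)) := by rw [e1, one_mul]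
    _ = _ := by ring

lemma hfun_low {v δ : ℝ} (hv : 0 < v) (hδ : 0 ≤ δ) :
    hfun (v + δ) * (1 + δ / (4 * (v + δ))) ≤ hfun v := by
  have hvd : 0 < v + δ := by linarith
  obtain ⟨u, hu⟩ : ∃ u, u = v + δ := ⟨_, rfl⟩
  have hup : 0 < u := hu ▸ hvd
  obtain ⟨s, hs⟩ : ∃ s, δ = u * s := ⟨δ / u, by field_simp⟩
  rw [← hu]
  have hs0 : 0 ≤ s := by
    by_contra hc; push Not at hc; nlinarith
  have hv' : v = u * (1 - s) := by linarith
  have : δ / (4 * u) = s / 4 := by rw [hs]; field_simp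
  rw [this]
  have e1 := hfun_pow hv
  have e2 := hfun_pow hup
  have h1 := hfun_pos hv
  refine le_of_pow_le_pow_left₀ (n := 4) (by norm_num) h1.le ?_
  refine le_of_mul_le_mul_right ?_ hv
  rw [e1, mul_pow]
  have hpoly : (1 + s / 4) ^ 4 * (1 - s) ≤ 1 := by
    have e : (1 + s / 4) ^ 4 * (1 - s) =
        1 - (5/8 * s^2 + 5/16 * s^3 + 15/256 * s^4 + s^5/256) := by ring
    rw [e]
    have : 0 ≤ 5/8 * s^2 + 5/16 * s^3 + 15/256 * s^4 + s^5/256 := by positivity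
    linarith
  calc hfun u ^ 4 * (1 + s / 4) ^ 4 * v = (hfun u ^ 4 * (1 + s / 4) ^ 4) * (u * (1 - s)) := by
        rw [← hv']
    _ = (hfun u ^ 4 * u) * ((1 + s / 4) ^ 4 * (1 - s)) := by ring
    _ ≤ 1 := by rw [e2, one_mul]; exact hpoly

/-- The one-step drop of the Lyapunov function. -/
lemma lyap {d : ℕ} (hd : 3 ≤ d) (R : ℕ) (hR : 1 ≤ R) (x : Zd d) (u : ℝ)
    (hudef : u = 400 + nsq x / (R : ℝ) ^ 2 + 1 / (R : ℝ) ^ 2) :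
    ∑ i : Fin d, (2 * d : ℝ)⁻¹ *
        (hfun (400 + nsq (x + stepVec (i, true)) / (R : ℝ) ^ 2)
          + hfun (400 + nsq (x + stepVec (i, false)) / (R : ℝ) ^ 2))
      + hfun u / (48 * u * (R : ℝ) ^ 2) ≤ hfun (400 + nsq x / (R : ℝ) ^ 2) := by
  have hd' : (3 : ℝ) ≤ d := by exact_mod_cast hd
  have hR' : (1 : ℝ) ≤ R := by exact_mod_cast hR
  have hn := nsq_nonneg x
  have hR2 : (0 : ℝ) < (R : ℝ) ^ 2 := by positivity
  have hu : 0 < u := by rw [hudef]; positivity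
  have hrho : nsq x / (R : ℝ) ^ 2 ≤ u := by
    have : 0 < 1 / (R : ℝ) ^ 2 := by positivity
    rw [hudef]; linarith
  have hhu := hfun_pos hu
  have hτ : ∀ i, |2 * (x i : ℝ) / (R : ℝ) ^ 2| ≤ u / 20 := by
    intro i
    have h1 : (x i : ℝ) ^ 2 ≤ nsq x :=
      Finset.single_le_sum (f := fun i => (x i : ℝ) ^ 2) (fun i _ => sq_nonneg _)
        (Finset.mem_univ i)
    have h2 : |(x i : ℝ)| ^ 2 ≤ nsq x := by rw [sq_abs]; exact h1
    rw [abs_div, abs_mul, abs_of_pos hR2, abs_two, div_le_iff₀ hR2]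
    have h3 : u * (R : ℝ) ^ 2 = 400 * (R : ℝ) ^ 2 + nsq x + 1 := by rw [hudef]; field_simp
    have h4 : 2 * |(x i : ℝ)| ≤ (400 * (R : ℝ) ^ 2 + nsq x + 1) / 20 := by
      nlinarith [sq_nonneg (|(x i : ℝ)| - 20)]
    linarith
  have hterm : ∀ i : Fin d, hfun (400 + nsq (x + stepVec (i, true)) / (R : ℝ) ^ 2)
          + hfun (400 + nsq (x + stepVec (i, false)) / (R : ℝ) ^ 2) ≤
      hfun u * (2 + 11 / 8 * (x i : ℝ) ^ 2 / ((R : ℝ) ^ 4 * u ^ 2)) := by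
    intro i
    have a1 := hfun_up hu (hτ i)
    have a2 := hfun_up (τ := -(2 * (x i : ℝ) / (R : ℝ) ^ 2)) hu (by rw [abs_neg]; exact hτ i)
    rw [nsq_step, nsq_step]
    have b1 : 400 + (nsq x + (if true = true then 2 else -2) * (x i : ℝ) + 1) / (R : ℝ) ^ 2 =
      u + 2 * (x i : ℝ) / (R : ℝ) ^ 2 := by rw [hudef, if_pos rfl]; ring
    have b2 : 400 + (nsq x + (if false = true then 2 else -2) * (x i : ℝ) + 1) / (R : ℝ) ^ 2 =
      u + -(2 * (x i : ℝ) / (R : ℝ) ^ 2) := by rw [hudef, if_neg (by simp)]; ring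
    rw [b1, b2]
    refine (add_le_add a1 a2).trans (le_of_eq ?_)
    field_simp
    ring
  have hlow := hfun_low (v := 400 + nsq x / (R : ℝ) ^ 2) (δ := 1 / (R : ℝ) ^ 2)
    (by positivity) (by positivity)
  rw [← hudef] at hlow
  refine le_trans ?_ hlow
  have hsum : ∑ i : Fin d, (2 * d : ℝ)⁻¹ *
        (hfun (400 + nsq (x + stepVec (i, true)) / (R : ℝ) ^ 2)
          + hfun (400 + nsq (x + stepVec (i, false)) / (R : ℝ) ^ 2)) ≤
      hfun u * (1 + 11 / 16 * nsq x / (d * (R : ℝ) ^ 4 * u ^ 2)) := by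
    calc _ ≤ ∑ i : Fin d, (2 * d : ℝ)⁻¹ *
            (hfun u * (2 + 11 / 8 * (x i : ℝ) ^ 2 / ((R : ℝ) ^ 4 * u ^ 2))) := by
          gcongr with i; exact hterm i
      _ = (2 * d : ℝ)⁻¹ * (hfun u * (d * 2 + 11 / 8 * nsq x / ((R : ℝ) ^ 4 * u ^ 2))) := by
          rw [← Finset.mul_sum, ← Finset.mul_sum, Finset.sum_add_distrib, ← Finset.sum_div,
            ← Finset.mul_sum, Finset.sum_const, Finset.card_univ, Fintype.card_fin, nsmul_eq_mul]
          rfl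
      _ = _ := by field_simp; ring
  have hfin : 11 / 16 * nsq x / (d * (R : ℝ) ^ 4 * u ^ 2) ≤ 11 / 48 * (1 / ((R : ℝ) ^ 2 * u)) := by
    rw [mul_one_div, div_le_div_iff₀ (by positivity) (by positivity)]
    rw [div_le_iff₀ hR2] at hrho
    have c1 : nsq x * ((R : ℝ) ^ 2 * u) ≤ u * (R : ℝ) ^ 2 * ((R : ℝ) ^ 2 * u) := by gcongr
    have c2 : 3 * (u * (R : ℝ) ^ 2 * ((R : ℝ) ^ 2 * u)) ≤
        d * (u * (R : ℝ) ^ 2 * ((R : ℝ) ^ 2 * u)) := by gcongr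
    nlinarith
  have e : hfun u * (1 + 1 / (R : ℝ) ^ 2 / (4 * u)) =
      hfun u * (1 + 11 / 48 * (1 / ((R : ℝ) ^ 2 * u))) + hfun u / (48 * u * (R : ℝ) ^ 2) := by
    field_simp; ring
  rw [e]
  have : hfun u * (1 + 11 / 16 * nsq x / (d * (R : ℝ) ^ 4 * u ^ 2)) ≤
      hfun u * (1 + 11 / 48 * (1 / ((R : ℝ) ^ 2 * u))) := by gcongr
  linarith

/-- The expected time spent in a ball of radius `5R`. -/
lemma Gr_up {d : ℕ} (hd : 3 ≤ d) : ∃ A : ℝ, 0 ≤ A ∧ ∀ (R : ℕ) (_ : 1 ≤ R) (z : Zd d),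
    Gr (ind 0 (5 * R)) z ≤ ENNReal.ofReal (A * (R : ℝ) ^ 2) := by
  obtain ⟨M, hMdef⟩ : ∃ M : ℝ, M = 25 * d + 401 := ⟨_, rfl⟩
  have hM : 0 < M := by rw [hMdef]; positivity
  have hhM := hfun_pos hM
  obtain ⟨A, hAdef⟩ : ∃ A : ℝ, A = 48 * M / hfun M := ⟨_, rfl⟩
  have hA : 0 ≤ A := by rw [hAdef]; positivity
  refine ⟨A, hA, fun R hR z => ?_⟩
  have hR' : (1 : ℝ) ≤ R := by exact_mod_cast hR
  have hR2 : (0 : ℝ) < (R : ℝ) ^ 2 := by positivity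
  have hv : ∀ x : Zd d, 400 ≤ 400 + nsq x / (R : ℝ) ^ 2 := fun x => by
    have := nsq_nonneg x
    have : 0 ≤ nsq x / (R : ℝ) ^ 2 := by positivity
    linarith
  have hpos : ∀ x : Zd d, 0 < hfun (400 + nsq x / (R : ℝ) ^ 2) :=
    fun x => hfun_pos (by linarith [hv x])
  let g : Zd d → ℝ := fun x => A * (R : ℝ) ^ 2 * hfun (400 + nsq x / (R : ℝ) ^ 2)
  have hg : ∀ x, 0 ≤ g x := fun x => by have := hpos x; positivity
  refine (Gr_le _ (fun x => ENNReal.ofReal (g x)) ?_ z).trans ?_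
  · intro x
    rw [Qop_ofReal hd g hg]
    obtain ⟨u, hudef⟩ : ∃ u : ℝ, u = 400 + nsq x / (R : ℝ) ^ 2 + 1 / (R : ℝ) ^ 2 := ⟨_, rfl⟩
    have hl := lyap hd R hR x u hudef
    have hu : 0 < u := by have := nsq_nonneg x; rw [hudef]; positivity
    have hhu := hfun_pos hu
    have e1 : ∑ i : Fin d, (2 * d : ℝ)⁻¹ *
          (g (x + stepVec (i, true)) + g (x + stepVec (i, false))) =
        A * (R : ℝ) ^ 2 * ∑ i : Fin d, (2 * d : ℝ)⁻¹ *
        (hfun (400 + nsq (x + stepVec (i, true)) / (R : ℝ) ^ 2)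
          + hfun (400 + nsq (x + stepVec (i, false)) / (R : ℝ) ^ 2)) := by
      rw [Finset.mul_sum]
      refine Finset.sum_congr rfl fun i _ => ?_
      simp only [g]; ring
    rw [e1]
    have hl2 := mul_le_mul_of_nonneg_left hl (show 0 ≤ A * (R : ℝ) ^ 2 by positivity)
    rw [mul_add] at hl2
    have hnn : 0 ≤ A * (R : ℝ) ^ 2 * (hfun u / (48 * u * (R : ℝ) ^ 2)) := by positivity
    unfold ind
    split_ifs with hx
    · have hxn : nsq x ≤ 25 * d * (R : ℝ) ^ 2 := by
        rw [sub_zero, supNorm_le] at hx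
        calc nsq x ≤ ∑ i : Fin d, (25 * (R : ℝ) ^ 2) := by
              refine Finset.sum_le_sum fun i _ => ?_
              have h1 : |(x i : ℝ)| ≤ 5 * R := by exact_mod_cast hx i
              have h2 := sq_abs (x i : ℝ)
              nlinarith [abs_nonneg (x i : ℝ)]
          _ = _ := by simp; ring
      have huM : u ≤ M := by
        have h1 : nsq x / (R : ℝ) ^ 2 ≤ 25 * d := by rw [div_le_iff₀ hR2]; exact hxn
        have h2 : 1 / (R : ℝ) ^ 2 ≤ 1 := by rw [div_le_one hR2]; nlinarith
        rw [hudef, hMdef]; linarith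
      have h1 : 1 ≤ A * (R : ℝ) ^ 2 * (hfun u / (48 * u * (R : ℝ) ^ 2)) := by
        have h2 : hfun M / (48 * M) ≤ hfun u / (48 * u) := by
          have := hfun_anti hu huM
          gcongr
        calc (1 : ℝ) = A * (hfun M / (48 * M)) := by rw [hAdef]; field_simp
          _ ≤ A * (hfun u / (48 * u)) := by gcongr
          _ = _ := by field_simp
      rw [← ENNReal.ofReal_one, ← ENNReal.ofReal_add zero_le_one]
      · apply ENNReal.ofReal_le_ofReal
        simp only [g]; linarith
      · refine mul_nonneg (by positivity) (Finset.sum_nonneg fun i _ => ?_)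
        have h3 := hpos (x + stepVec (i, true))
        have h4 := hpos (x + stepVec (i, false))
        positivity
    · rw [zero_add]
      apply ENNReal.ofReal_le_ofReal
      simp only [g]; linarith
  · apply ENNReal.ofReal_le_ofReal
    simp only [g]
    have h0 : hfun 1 = 1 := by simp [hfun]
    have h1 : hfun (400 + nsq z / (R : ℝ) ^ 2) ≤ 1 := by
      rw [← h0]; exact hfun_anti one_pos (by linarith [hv z])
    have : 0 ≤ A * (R : ℝ) ^ 2 := by positivity
    nlinarith

lemma sum_ind {d : ℕ} (r R : ℕ) (hr : 1 ≤ r) (hrR : r ≤ R) (x : Zd d) :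
    ∑' y : {y : Zd d // (∀ i, (10 * r : ℤ) ∣ y i) ∧ supNorm y ≤ 2 * R + r}, ind y.1 (2 * r) x
      ≤ ind 0 (5 * R) x := by
  by_cases h : ∃ y : {y : Zd d // (∀ i, (10 * r : ℤ) ∣ y i) ∧ supNorm y ≤ 2 * R + r},
      supNorm (x - y.1) ≤ 2 * r
  · obtain ⟨y, hy⟩ := h
    rw [tsum_eq_single y]
    · unfold ind
      rw [if_pos hy, if_pos]
      have h2 := y.2.2
      rw [supNorm_le] at *
      intro i
      have h3 := hy i
      have h4 := h2 i
      simp only [Pi.sub_apply, Pi.zero_apply, sub_zero] at *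
      rw [abs_le] at *
      push_cast at *
      omega
    · intro y' hne
      unfold ind
      rw [if_neg]
      intro hy'
      apply hne
      apply Subtype.ext
      funext i
      rw [supNorm_le] at hy hy'
      have h1 := hy i
      have h2 := hy' i
      have h3 : (10 * r : ℤ) ∣ y'.1 i - y.1 i := dvd_sub (y'.2.1 i) (y.2.1 i)
      have h4 : |y'.1 i - y.1 i| < 10 * r := by
        simp only [Pi.sub_apply] at *
        rw [abs_le] at *
        rw [abs_lt]
        push_cast at *
        omega
      exact sub_eq_zero.1 (Int.eq_zero_of_abs_lt_dvd h3 h4)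
  · push Not at h
    have : ∀ y : {y : Zd d // (∀ i, (10 * r : ℤ) ∣ y i) ∧ supNorm y ≤ 2 * R + r},
        ind y.1 (2 * r) x = 0 := fun y => by
      unfold ind; rw [if_neg (not_le.2 (h y))]
    simp [this]

theorem expected_number_of_visited_boxes_bound {d : ℕ} (hd : 3 ≤ d) :
    ∃ C : ℝ≥0∞, C ≠ ⊤ ∧ ∀ (W : SRW d) (r R : ℕ) (z : Zd d),
      1 ≤ r → r ≤ R → supNorm z ≤ R →
      ∑' y : {y : Zd d // (∀ i, (10 * r : ℤ) ∣ y i) ∧ supNorm y ≤ 2 * R + r},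
          W.P z (Hits {w : Zd d | supNorm (w - y.1) ≤ r})
        ≤ C * ((R : ℝ≥0∞) / r) ^ 2 := by
  obtain ⟨A, hA, hG⟩ := Gr_up hd
  refine ⟨ENNReal.ofReal (4 * A), ENNReal.ofReal_ne_top, fun W r R z hr hrR hz => ?_⟩
  have hr1 : (1 : ℝ) ≤ r := by exact_mod_cast hr
  have hr0 : (0 : ℝ) < (r : ℝ) ^ 2 := by positivity
  have hR : 1 ≤ R := hr.trans hrR
  obtain ⟨c, hc⟩ : ∃ c : ℝ≥0∞, c = ENNReal.ofReal (4 / (r : ℝ) ^ 2) := ⟨_, rfl⟩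
  have hhit : ∀ y : Zd d, W.P z (Hits {w : Zd d | supNorm (w - y) ≤ r}) ≤
      c * Gr (ind y (2 * r)) z := by
    intro y
    refine hit_le W z _ (fun x => c * Gr (ind y (2 * r)) x) ?_ ?_
    · intro x
      have : Qop (fun x => c * Gr (ind y (2 * r)) x) x = c * Qop (Gr (ind y (2 * r))) x := by
        unfold Qop
        rw [Finset.mul_sum]
        refine Finset.sum_congr rfl fun p _ => ?_
        ring
      rw [this]
      gcongr
      exact Qop_Gr _ _
    · intro x hx
      calc (1 : ℝ≥0∞) = c * ENNReal.ofReal ((r : ℝ) ^ 2 / 4) := by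
            rw [hc, ← ENNReal.ofReal_mul (by positivity), ← ENNReal.ofReal_one]
            congr 1; field_simp
        _ ≤ _ := by gcongr; exact Gr_low hd y x r hr hx
  calc _ ≤ ∑' y : {y : Zd d // (∀ i, (10 * r : ℤ) ∣ y i) ∧ supNorm y ≤ 2 * R + r},
          c * Gr (ind y.1 (2 * r)) z := ENNReal.tsum_le_tsum fun y => hhit y.1
    _ = c * ∑' t : ℕ, Qop^[t] (fun x => ∑' y : {y : Zd d // (∀ i, (10 * r : ℤ) ∣ y i) ∧
          supNorm y ≤ 2 * R + r}, ind y.1 (2 * r) x) z := by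
        rw [ENNReal.tsum_mul_left]
        simp_rw [Qit_tsum]
        unfold Gr
        rw [ENNReal.tsum_comm]
    _ ≤ c * Gr (ind 0 (5 * R)) z := by
        unfold Gr
        gcongr with t
        exact Qit_mono (sum_ind r R hr hrR) t z
    _ ≤ c * ENNReal.ofReal (A * (R : ℝ) ^ 2) := by gcongr; exact hG R hR z
    _ = _ := by
        have e : (R : ℝ≥0∞) / r = ENNReal.ofReal ((R : ℝ) / r) := by
          rw [ENNReal.ofReal_div_of_pos (by linarith), ENNReal.ofReal_natCast,
            ENNReal.ofReal_natCast]
        rw [e, hc, ← ENNReal.ofReal_pow (by positivity), ← ENNReal.ofReal_mul (by positivity),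
          ← ENNReal.ofReal_mul (by positivity)]
        congr 1
        field_simp

end
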